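/- If q is even and q/2 ≤ k ≤ q-1, then the minimum Hamming distance of the puncture code P(C) of the [q^2+1, k, q^2+2-k]_{q^2} Reed-Solomon code C is exactly q(k + 1 - q/2). -/

import Mathlib

open Polynomial

/-- The codeword of the (extended) `k`-dimensional Reed-Solomon code of length `q² + 1`
associated to a polynomial `f`: the evaluations of `f` at all elements of the field
(enumerated by `a`), followed by the coefficient of `X^(k-1)` in `f`. -/
def rsWord (q k : ℕ) {F : Type} [Field F] (a : Fin (q ^ 2) → F)
    (f : Polynomial F) (i : Fin (q ^ 2 + 1)) : F :=
  if hi : (i : ℕ) < q ^ 2 then f.eval (a ⟨(i : ℕ), hi⟩) else f.coeff (k - 1)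

/-- The puncture code `P(C)` of the `k`-dimensional Reed-Solomon code `C` of length `q² + 1`
over `F = 𝔽_{q²}`: all vectors `λ` with entries in the subfield `𝔽_q` (i.e. `λ_i^q = λ_i`)
such that `∑ λ_i u_i v_i^q = 0` for all codewords `u, v` of `C`. -/
def puncRS (q k : ℕ) {F : Type} [Field F] [Fintype F] (a : Fin (q ^ 2) → F) :
    Set (Fin (q ^ 2 + 1) → F) :=
  {lam | (∀ i, lam i ^ q = lam i) ∧
    ∀ f g : Polynomial F, f.degree < (k : WithBot ℕ) → g.degree < (k : WithBot ℕ) →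
      ∑ i, lam i * rsWord q k a f i * (rsWord q k a g i) ^ q = 0}

/-- The Hamming weight of a vector: the number of its nonzero coordinates. -/
noncomputable def wt {n : ℕ} {F : Type} [Zero F] (v : Fin n → F) : ℕ :=
  Set.ncard {i | v i ≠ 0}

/-!
**Lower bound.** A nonzero codeword with a zero coordinate (the others have weight `q ^ 2 + 1`),
moved to infinity by inverting an affine coordinate, is a weight on points `(x, x ^ q)` that is
orthogonal to all bivariate polynomials of degree `< k` in each variable. Let `N` be the number of
points. The products of two spaces of polynomials of bidegree `< (p, r)` and
`< (k + 1 - p, k + 1 - r)` have bidegree `< (k, k)`, so the values of the two spaces at the points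
are orthogonal and their dimensions add up to at most `N` if no nonzero polynomial in them
vanishes there. If `N < 2 * t * e` with `t + e = k + 1` and `t ≤ e`, then some nonzero polynomial
of bidegree `< (t, e)` or `< (e, t)` vanishes at the points, and the Frobenius map `z ↦ z ^ q`,
which exchanges `x` and `x ^ q`, exchanges the two cases. Two vanishing polynomials of small
bidegree have a common factor that already vanishes: for coprime ones, a resultant argument makes
the weight zero. Hence a minimal vanishing `D` divides all vanishing polynomials of small
bidegree, in particular its own conjugate, and has bidegree `(a, a)`. Substituting `Y = X ^ q` in
`D` gives `N ≤ a * (q + 1)`, and the dimension count for the multiples of `D` gives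
`2 * a * (k + 1 - a) ≤ N`; with `q ≤ 2 * e` the two are incompatible. For `q` even, `e = q / 2`
and `t = k + 1 - q / 2`.

**Attaining it.** With `τ = x + x ^ q`, the weight `Tr_{𝔽_q/𝔽_2}(τ) * ∏_{d ∈ D} (τ - d)`, where `D`
consists of `q - 1 - k` elements of nonzero trace, is a codeword: the trace is orthogonal to all
polynomials of bidegree `< (q - 1, q - 1)`, and each linear factor costs one in each degree. It
vanishes unless `τ` is one of the remaining `q / 2 - (q - 1 - k)` elements of nonzero trace, each of
which is attained `q` times.
-/

open scoped Polynomial.Bivariate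

section Resultant

variable {R : Type*} [CommRing R]

theorem resultant_ne_zero_of_isRelPrime [IsDomain R] [UniqueFactorizationMonoid R] {f g : R[X]}
    {n : ℕ} (hf : f ≠ 0) (hg : g.natDegree ≤ n) (hfg : IsRelPrime f g) :
    resultant f g f.natDegree n ≠ 0 := by
  intro hres
  let b := ((degreeLT.basis R f.natDegree).prod (degreeLT.basis R n)).reindex finSumFinEquiv
  obtain ⟨v, hv, hv0⟩ := Matrix.exists_mulVec_eq_zero_iff.mpr hres
  obtain ⟨⟨⟨p, hp⟩, ⟨q, hq⟩⟩, hpq⟩ := b.equivFun.surjective v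
  have hmap : sylvesterMap f g le_rfl hg (⟨p, hp⟩, ⟨q, hq⟩) = 0 := by
    apply (degreeLT.basis R _).equivFun.injective
    rw [← toMatrix_sylvesterMap' f g le_rfl hg, ← hpq] at hv0
    simpa using (LinearMap.toMatrix_mulVec_repr b _ _ _).symm.trans hv0
  have hsum : f * q + g * p = 0 := congr_arg Subtype.val hmap
  have hfp : f ∣ p := hfg.dvd_of_dvd_mul_left ⟨-q, by linear_combination hsum⟩
  have hp0 : p = 0 := eq_zero_of_dvd_of_degree_lt hfp <|
    (mem_degreeLT.mp hp).trans_eq (degree_eq_natDegree hf).symm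
  have hq0 : q = 0 := by simpa [hp0, hf] using hsum
  subst hp0 hq0
  exact hv (hpq.symm.trans (map_zero b.equivFun))

theorem exists_mul_add_mul_eq_of_resultant_ne_zero {K : Type*} [Field K] {f g P : K[X]} {m n : ℕ}
    (hf : f.natDegree ≤ m) (hg : g.natDegree ≤ n) (h : resultant f g m n ≠ 0)
    (hP : P.degree < ((m + n : ℕ) : WithBot ℕ)) :
    ∃ u v : K[X], u.degree < n ∧ v.degree < m ∧ f * u + g * v = P := by
  have hadj := LinearMap.congr_fun (sylveserMap_comp_adjSylvester f g hf hg)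
    ⟨P, mem_degreeLT.mpr hP⟩
  set w := (resultant f g m n)⁻¹ • adjSylvester (m := m) (n := n) f g ⟨P, mem_degreeLT.mpr hP⟩
  have hw : sylvesterMap f g hf hg w = ⟨P, mem_degreeLT.mpr hP⟩ := by
    rw [map_smul, ← LinearMap.comp_apply, hadj]
    simp [smul_smul, h]
  exact ⟨w.2, w.1, mem_degreeLT.mp w.2.2, mem_degreeLT.mp w.1.2, congr_arg Subtype.val hw⟩

end Resultant

section Bidegree

variable {R : Type*} [CommRing R] {p r p' r' : ℕ} {f g : R[X][Y]}

theorem coeff_coeff_swap (f : R[X][Y]) (i j : ℕ) :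
    ((Bivariate.swap f).coeff i).coeff j = (f.coeff j).coeff i := by
  induction f using Polynomial.induction_on' with
  | add p q hp hq => simp [hp, hq]
  | monomial n p =>
    induction p using Polynomial.induction_on' with
    | add p q hp hq => simp [hp, hq]
    | monomial m c =>
      rw [Bivariate.swap_monomial_monomial]
      simp only [coeff_monomial]
      split_ifs <;> simp_all [coeff_monomial]

theorem evalEval_swap (f : R[X][Y]) (x y : R) :
    (Bivariate.swap f).evalEval x y = f.evalEval y x := by
  simpa only [coe_aevalAeval_eq_evalEval] using Bivariate.aevalAeval_swap x y f

/-- The degree of a bivariate polynomial in its first variable `X`; the degree in `Y` is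
`Polynomial.natDegree`. -/
noncomputable def degreeX (f : R[X][Y]) : ℕ :=
  (Bivariate.swap f).natDegree

theorem degreeX_swap (f : R[X][Y]) : degreeX (Bivariate.swap f) = f.natDegree := by
  rw [degreeX, Bivariate.swap_swap_apply]

theorem degreeX_C (u : R[X]) : degreeX (C u) = u.natDegree := by
  rw [degreeX, Bivariate.swap_C, natDegree_map_eq_of_injective C_injective]

theorem degreeX_mul [IsDomain R] (hf : f ≠ 0) (hg : g ≠ 0) :
    degreeX (f * g) = degreeX f + degreeX g := by
  rw [degreeX, map_mul, natDegree_mul (by simpa) (by simpa), degreeX, degreeX]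

variable (R p r) in
/-- The module of bivariate polynomials of degree `< p` in `X` and degree `< r` in `Y`. -/
noncomputable def bidegreeLT : Submodule R R[X][Y] :=
  ((degreeLT R[X] p).restrictScalars R).comap (Bivariate.swap (R := R)).toLinearMap ⊓
    (degreeLT R[X] r).restrictScalars R

theorem mem_bidegreeLT :
    f ∈ bidegreeLT R p r ↔ (Bivariate.swap f).degree < p ∧ f.degree < r := by
  simp [bidegreeLT, mem_degreeLT]

theorem mem_bidegreeLT_iff_of_ne_zero (hf : f ≠ 0) :
    f ∈ bidegreeLT R p r ↔ degreeX f < p ∧ f.natDegree < r := by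
  rw [mem_bidegreeLT, degreeX, natDegree_lt_iff_degree_lt (by simpa),
    natDegree_lt_iff_degree_lt hf]

theorem mem_bidegreeLT_iff_coeff :
    f ∈ bidegreeLT R p r ↔ ∀ i j, (f.coeff j).coeff i ≠ 0 → i < p ∧ j < r := by
  simp only [mem_bidegreeLT, degree_lt_iff_coeff_zero, Polynomial.ext_iff, coeff_coeff_swap,
    coeff_zero]
  grind

theorem bidegreeLT_mono (hp : p ≤ p') (hr : r ≤ r') : bidegreeLT R p r ≤ bidegreeLT R p' r' := by
  intro f hf
  rw [mem_bidegreeLT_iff_coeff] at hf ⊢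
  exact fun i j hij ↦ ⟨(hf i j hij).1.trans_le hp, (hf i j hij).2.trans_le hr⟩

theorem mem_bidegreeLT_succ (hp : degreeX f ≤ p) (hr : f.natDegree ≤ r) :
    f ∈ bidegreeLT R (p + 1) (r + 1) := by
  rw [mem_bidegreeLT, degree_lt_iff_coeff_zero, degree_lt_iff_coeff_zero]
  exact ⟨fun i hi ↦ coeff_eq_zero_of_natDegree_lt (by unfold degreeX at hp; omega),
    fun i hi ↦ coeff_eq_zero_of_natDegree_lt (by omega)⟩

theorem mul_mem_bidegreeLT (hf : f ∈ bidegreeLT R (p + 1) (r + 1)) (hg : g ∈ bidegreeLT R p' r') :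
    f * g ∈ bidegreeLT R (p + p') (r + r') := by
  have degree_mul_lt {a b : R[X][Y]} {m n : ℕ} (ha : a.degree < (m + 1 : ℕ)) (hb : b.degree < n) :
      (a * b).degree < (m + n : ℕ) := by
    rcases eq_or_ne a 0 with rfl | ha0
    · simp [bot_lt_iff_ne_bot]
    rcases eq_or_ne b 0 with rfl | hb0
    · simp [bot_lt_iff_ne_bot]
    refine (degree_mul_le a b).trans_lt ?_
    rw [degree_eq_natDegree ha0, degree_eq_natDegree hb0] at *
    norm_cast at *
    omega
  rw [mem_bidegreeLT] at *
  exact ⟨by simpa using degree_mul_lt hf.1 hg.1, degree_mul_lt hf.2 hg.2⟩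

theorem C_mem_bidegreeLT {u : R[X]} (hu : u.degree < p) (hr : 1 ≤ r) : C u ∈ bidegreeLT R p r := by
  rw [mem_bidegreeLT, Bivariate.swap_C]
  exact ⟨degree_map_le.trans_lt hu, degree_C_le.trans_lt (by exact_mod_cast hr)⟩

theorem map_C_mem_bidegreeLT {u : R[X]} (hp : 1 ≤ p) (hu : u.degree < r) :
    u.map C ∈ bidegreeLT R p r := by
  rw [mem_bidegreeLT, Bivariate.swap_map_C]
  exact ⟨degree_C_le.trans_lt (by exact_mod_cast hp), degree_map_le.trans_lt hu⟩

/-- The basis of the bivariate polynomials given by the monomials `X ^ i * Y ^ j`. -/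
noncomputable def bivariateMonomials (R : Type*) [CommRing R] : Module.Basis (ℕ × ℕ) R R[X][Y] :=
  (basisMonomials R).smulTower (basisMonomials R[X])

theorem bivariateMonomials_apply (i j : ℕ) :
    bivariateMonomials R (i, j) = C (X ^ i) * Y ^ j := by
  simp [bivariateMonomials, Module.Basis.smulTower_apply, ← X_pow_eq_monomial, smul_eq_C_mul]

theorem bidegreeLT_eq_span :
    bidegreeLT R p r = Submodule.span R (Set.range fun ij : Fin p × Fin r ↦
      bivariateMonomials R (ij.1, ij.2)) := by
  have hrange : (Set.range fun ij : Fin p × Fin r ↦ bivariateMonomials R (ij.1, ij.2)) =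
      bivariateMonomials R '' Set.Iio p ×ˢ Set.Iio r := by
    ext
    simp [Fin.exists_iff, and_assoc]
  ext f
  rw [hrange, Module.Basis.mem_span_image, mem_bidegreeLT_iff_coeff]
  simp only [Set.subset_def, Prod.forall, Finset.mem_coe, Finsupp.mem_support_iff,
    bivariateMonomials, Module.Basis.smulTower_repr]
  rfl

instance : Module.Finite R (bidegreeLT R p r) := by
  rw [bidegreeLT_eq_span]
  exact Module.Finite.span_of_finite R (Set.finite_range _)

theorem finrank_bidegreeLT [Nontrivial R] : Module.finrank R (bidegreeLT R p r) = p * r := by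
  rw [bidegreeLT_eq_span, finrank_span_eq_card]
  · simp
  · exact (bivariateMonomials R).linearIndependent.comp
      (fun ij : Fin p × Fin r ↦ ((ij.1, ij.2) : ℕ × ℕ))
      (fun a b h ↦ by simpa [Prod.ext_iff, Fin.ext_iff] using h)

end Bidegree

section Orthogonality

variable {K ι : Type*} [Field K] [Fintype ι]

theorem finrank_add_finrank_le_card_of_weighted_orthogonal {μ : ι → K} (hμ : ∀ i, μ i ≠ 0)
    {U V : Submodule K (ι → K)} (h : ∀ u ∈ U, ∀ v ∈ V, ∑ i, μ i * (u i * v i) = 0) :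
    Module.finrank K U + Module.finrank K V ≤ Fintype.card ι := by
  classical
  have hnondeg : (Matrix.toBilin' (Matrix.diagonal μ)).Nondegenerate :=
    LinearMap.BilinForm.nondegenerate_toBilin'_of_det_ne_zero' _ <| by
      simpa [Finset.prod_eq_zero_iff] using hμ
  have hform (u v : ι → K) : Matrix.toBilin' (Matrix.diagonal μ) u v = ∑ i, μ i * (u i * v i) := by
    simp only [Matrix.toBilin'_apply, Matrix.diagonal_apply]
    simp [mul_left_comm, mul_assoc]
  have hV : V ≤ (Matrix.toBilin' (Matrix.diagonal μ)).orthogonal U := fun v hv u hu ↦ by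
    simpa only [hform] using h u hu v hv
  have hfinrank := LinearMap.BilinForm.finrank_orthogonal hnondeg U
  have hle := Submodule.finrank_mono hV
  have hU := U.finrank_le
  rw [Module.finrank_fintype_fun_eq_card] at *
  omega

theorem finrank_map_add_finrank_inf_ker {M N : Type*} [AddCommGroup M] [Module K M]
    [AddCommGroup N] [Module K N] (T : M →ₗ[K] N) (A : Submodule K M) [Module.Finite K A] :
    Module.finrank K (A.map T) + Module.finrank K ↥(A ⊓ LinearMap.ker T) = Module.finrank K A := by
  rw [← LinearMap.finrank_range_add_finrank_ker (T.domRestrict A), LinearMap.range_domRestrict,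
    LinearMap.ker_domRestrict, ← Submodule.finrank_map_subtype_eq A, Submodule.map_comap_subtype]

theorem finrank_add_finrank_le_of_weighted_orthogonal {M : Type*} [AddCommGroup M] [Module K M]
    (T : M →ₗ[K] ι → K) {μ : ι → K} (hμ : ∀ i, μ i ≠ 0) (A B : Submodule K M)
    [Module.Finite K A] [Module.Finite K B]
    (h : ∀ u ∈ A, ∀ v ∈ B, ∑ i, μ i * (T u i * T v i) = 0) :
    Module.finrank K A + Module.finrank K B ≤ Fintype.card ι +
      Module.finrank K ↥(A ⊓ LinearMap.ker T) + Module.finrank K ↥(B ⊓ LinearMap.ker T) := by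
  have hle := finrank_add_finrank_le_card_of_weighted_orthogonal hμ
    (U := A.map T) (V := B.map T) (by rintro _ ⟨u, hu, rfl⟩ _ ⟨v, hv, rfl⟩; exact h u hu v hv)
  have hA := finrank_map_add_finrank_inf_ker T A
  have hB := finrank_map_add_finrank_inf_ker T B
  omega

end Orthogonality

section EvalAt

variable {K ι : Type*} [Field K] {x y : ι → K}

/-- Evaluation of bivariate polynomials at the points `(x i, y i)`. -/
noncomputable def evalPoints (x y : ι → K) : K[X][Y] →ₗ[K] ι → K :=
  LinearMap.pi fun i ↦ (aevalAeval (x i) (y i)).toLinearMap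

theorem evalPoints_apply (f : K[X][Y]) (i : ι) :
    evalPoints x y f i = f.evalEval (x i) (y i) :=
  congr_fun (coe_aevalAeval_eq_evalEval (x i) (y i)) f

variable [Fintype ι] {μ : ι → K} {p r p' r' : ℕ}

/-- The weights `μ` at the points `(x i, y i)` annihilate all bivariate polynomials of degree
`< p` in `X` and degree `< r` in `Y`. -/
def AnnihilatesBidegreeLT (μ x y : ι → K) (p r : ℕ) : Prop :=
  ∀ f ∈ bidegreeLT K p r, ∑ i, μ i * f.evalEval (x i) (y i) = 0

theorem annihilatesBidegreeLT_iff_pow :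
    AnnihilatesBidegreeLT μ x y p r ↔ ∀ i < p, ∀ j < r, ∑ s, μ s * (x s ^ i * y s ^ j) = 0 := by
  have hker : AnnihilatesBidegreeLT μ x y p r ↔
      bidegreeLT K p r ≤ LinearMap.ker (Fintype.linearCombination K μ ∘ₗ evalPoints x y) := by
    simp only [AnnihilatesBidegreeLT, SetLike.le_def, LinearMap.mem_ker, LinearMap.comp_apply,
      Fintype.linearCombination_apply, evalPoints_apply, smul_eq_mul, mul_comm]
  rw [hker, bidegreeLT_eq_span, Submodule.span_le, Set.range_subset_iff]
  simp only [Prod.forall, Fin.forall_iff, SetLike.mem_coe, LinearMap.mem_ker, LinearMap.comp_apply,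
    Fintype.linearCombination_apply, evalPoints_apply, bivariateMonomials_apply, evalEval_mul,
    evalEval_pow, evalEval_C, evalEval_X, eval_pow, eval_X, smul_eq_mul, mul_comm (μ _)]

theorem AnnihilatesBidegreeLT.mono (h : AnnihilatesBidegreeLT μ x y p' r') (hp : p ≤ p')
    (hr : r ≤ r') : AnnihilatesBidegreeLT μ x y p r :=
  fun f hf ↦ h f (bidegreeLT_mono hp hr hf)

theorem AnnihilatesBidegreeLT.mul_weight {g : K[X][Y]}
    (h : AnnihilatesBidegreeLT μ x y (p + p') (r + r')) (hg : g ∈ bidegreeLT K (p + 1) (r + 1)) :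
    AnnihilatesBidegreeLT (fun i ↦ μ i * g.evalEval (x i) (y i)) x y p' r' := by
  intro f hf
  simpa only [evalEval_mul, mul_assoc] using h _ (mul_mem_bidegreeLT hg hf)

theorem AnnihilatesBidegreeLT.map {L : Type*} [Field L] (h : AnnihilatesBidegreeLT μ x y p r)
    (σ : K →+* L) : AnnihilatesBidegreeLT (σ ∘ μ) (σ ∘ x) (σ ∘ y) p r := by
  rw [annihilatesBidegreeLT_iff_pow] at h ⊢
  intro i hi j hj
  simpa only [map_sum, map_mul, map_pow, map_zero, Function.comp_apply] using
    congr_arg σ (h i hi j hj)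

theorem AnnihilatesBidegreeLT.restrict_support [Fintype (Function.support μ)]
    (h : AnnihilatesBidegreeLT μ x y p r) :
    AnnihilatesBidegreeLT (fun i : Function.support μ ↦ μ i) (fun i ↦ x i) (fun i ↦ y i) p r := by
  intro f hf
  rw [Finset.sum_set_coe (Function.support μ) (f := fun i ↦ μ i * f.evalEval (x i) (y i)),
    ← h f hf]
  refine Finset.sum_subset (Finset.subset_univ _) fun i _ hi ↦ ?_
  rw [Set.mem_toFinset, Function.notMem_support] at hi
  rw [hi, zero_mul]

theorem finrank_bidegreeLT_add_le (hμ : ∀ i, μ i ≠ 0) {P R : ℕ}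
    (h : AnnihilatesBidegreeLT μ x y (p + P) (r + R)) :
    (p + 1) * (r + 1) + P * R ≤ Fintype.card ι +
      Module.finrank K ↥(bidegreeLT K (p + 1) (r + 1) ⊓ LinearMap.ker (evalPoints x y)) +
      Module.finrank K ↥(bidegreeLT K P R ⊓ LinearMap.ker (evalPoints x y)) := by
  have hle := finrank_add_finrank_le_of_weighted_orthogonal (evalPoints x y) hμ
    (bidegreeLT K (p + 1) (r + 1)) (bidegreeLT K P R) fun f hf g hg ↦ by
      simpa only [evalPoints_apply, evalEval_mul] using h _ (mul_mem_bidegreeLT hf hg)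
  rwa [finrank_bidegreeLT, finrank_bidegreeLT] at hle

end EvalAt

section CommonZeros

variable {K : Type*} [Field K] {f g h : K[X][Y]} {p m n : ℕ} {x₀ : K}

theorem C_X_sub_C_dvd_of_map_evalRingHom_eq_zero (h : f.map (evalRingHom x₀) = 0) :
    C (X - C x₀) ∣ f := by
  rw [C_dvd_iff_dvd_coeff]
  intro j
  rw [dvd_iff_isRoot, IsRoot, ← coe_evalRingHom, ← coeff_map, h, coeff_zero]

theorem mem_bidegreeLT_of_C_X_sub_C_mul_mem (h : C (X - C x₀) * f ∈ bidegreeLT K (p + 1) n) :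
    f ∈ bidegreeLT K p n := by
  rcases eq_or_ne f 0 with rfl | hf
  · exact zero_mem _
  have hX : (C (X - C x₀) : K[X][Y]) ≠ 0 := C_ne_zero.mpr (X_sub_C_ne_zero x₀)
  rw [mem_bidegreeLT_iff_of_ne_zero (mul_ne_zero hX hf), degreeX_mul hX hf, degreeX_C,
    natDegree_X_sub_C, natDegree_C_mul (X_sub_C_ne_zero x₀)] at h
  rw [mem_bidegreeLT_iff_of_ne_zero hf]
  omega

theorem exists_sub_C_mul_mem_span_pair (hfp : degreeX f ≤ p) (hgp : degreeX g ≤ p)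
    (hfm : f.natDegree ≤ m) (hgn : g.natDegree ≤ n) (hx₀ : (resultant f g m n).eval x₀ ≠ 0)
    (hh : h ∈ bidegreeLT K (p + 1) (m + n)) :
    ∃ h' ∈ bidegreeLT K p (m + n), h - C (X - C x₀) * h' ∈ Ideal.span {f, g} := by
  have hres : resultant (f.map (evalRingHom x₀)) (g.map (evalRingHom x₀)) m n ≠ 0 := by
    rwa [resultant_map_map]
  obtain ⟨u, v, hu, hv, huv⟩ := exists_mul_add_mul_eq_of_resultant_ne_zero
    (natDegree_map_le.trans hfm) (natDegree_map_le.trans hgn) hres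
    (degree_map_le.trans_lt (mem_bidegreeLT.mp hh).2)
  have hfu : f * u.map C ∈ bidegreeLT K (p + 1) (m + n) :=
    mul_mem_bidegreeLT (mem_bidegreeLT_succ hfp hfm) (map_C_mem_bidegreeLT le_rfl hu)
  have hgv : g * v.map C ∈ bidegreeLT K (p + 1) (m + n) :=
    add_comm n m ▸ mul_mem_bidegreeLT (mem_bidegreeLT_succ hgp hgn) (map_C_mem_bidegreeLT le_rfl hv)
  have hmap (w : K[X]) : (w.map C).map (evalRingHom x₀) = w := by
    rw [map_map, show (evalRingHom x₀).comp C = RingHom.id K by ext; simp, map_id]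
  obtain ⟨h', hh'⟩ : C (X - C x₀) ∣ h - (f * u.map C + g * v.map C) := by
    apply C_X_sub_C_dvd_of_map_evalRingHom_eq_zero
    rw [Polynomial.map_sub, Polynomial.map_add, Polynomial.map_mul, Polynomial.map_mul, hmap, hmap,
      huv, sub_self]
  refine ⟨h', mem_bidegreeLT_of_C_X_sub_C_mul_mem (hh' ▸ sub_mem hh (add_mem hfu hgv)), ?_⟩
  rw [Ideal.mem_span_pair]
  exact ⟨u.map C, v.map C, by linear_combination -hh'⟩

theorem exists_sub_C_pow_mul_mem_span_pair (hfp : degreeX f ≤ p) (hgp : degreeX g ≤ p)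
    (hfm : f.natDegree ≤ m) (hgn : g.natDegree ≤ n) (hx₀ : (resultant f g m n).eval x₀ ≠ 0)
    (N : ℕ) (hh : h ∈ bidegreeLT K (p + N) (m + n)) :
    ∃ h' ∈ bidegreeLT K p (m + n), h - C ((X - C x₀) ^ N) * h' ∈ Ideal.span {f, g} := by
  induction N generalizing h with
  | zero => exact ⟨h, hh, by simp⟩
  | succ N ih =>
    obtain ⟨h₁, hh₁, hmem₁⟩ := exists_sub_C_mul_mem_span_pair (p := p + N) (by omega) (by omega)
      hfm hgn hx₀ hh
    obtain ⟨h₂, hh₂, hmem₂⟩ := ih hh₁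
    refine ⟨h₂, hh₂, ?_⟩
    convert add_mem hmem₁ (Ideal.mul_mem_left _ (C (X - C x₀)) hmem₂) using 1
    rw [pow_succ, C_mul]
    ring

variable {ι : Type*} [Fintype ι] {μ x y : ι → K} {r : ℕ}

theorem evalEval_eq_of_sub_mem_span_pair {h' : K[X][Y]} {c : K[X]} {x y : K}
    (hf0 : f.evalEval x y = 0) (hg0 : g.evalEval x y = 0)
    (hmem : h - C c * h' ∈ Ideal.span {f, g}) :
    h.evalEval x y = c.eval x * h'.evalEval x y := by
  obtain ⟨u, v, huv⟩ := Ideal.mem_span_pair.mp hmem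
  have heval := congr_arg (evalEval x y) huv
  simp only [evalEval_add, evalEval_mul, evalEval_sub, evalEval_C, hf0, hg0] at heval
  linear_combination -heval

/- By the resultant, every polynomial agrees modulo `f` and `g` with `(X - x₀) ^ N` times a
polynomial of small bidegree, and `X - x₀` is invertible on the points: already the polynomials of
small bidegree separate the points. -/
theorem AnnihilatesBidegreeLT.eq_zero_of_isRelPrime [Infinite K]
    (hμ : AnnihilatesBidegreeLT μ x y p r) (hx : Function.Injective x) (hr : 1 ≤ r)
    (hf : f ≠ 0) (hfg : IsRelPrime f g) (hfp : degreeX f ≤ p) (hgp : degreeX g ≤ p)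
    (hfgr : f.natDegree + g.natDegree ≤ r)
    (hf0 : ∀ i, μ i ≠ 0 → f.evalEval (x i) (y i) = 0)
    (hg0 : ∀ i, μ i ≠ 0 → g.evalEval (x i) (y i) = 0) : μ = 0 := by
  classical
  obtain ⟨n, rfl⟩ := Nat.exists_eq_add_of_le ((Nat.le_add_right _ _).trans hfgr)
  have hgn : g.natDegree ≤ n := by omega
  have hres := resultant_ne_zero_of_isRelPrime hf hgn hfg
  obtain ⟨x₀, hx₀⟩ :
      ∃ x₀, (resultant f g f.natDegree n * Lagrange.nodal Finset.univ x).eval x₀ ≠ 0 :=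
    exists_eval_ne_zero_of_natDegree_lt_card _ (mul_ne_zero hres Lagrange.nodal_ne_zero)
      (Cardinal.natCast_lt_aleph0.trans_le (Cardinal.aleph0_le_mk K))
  rw [eval_mul, mul_ne_zero_iff, Lagrange.eval_nodal, Finset.prod_ne_zero_iff] at hx₀
  refine funext fun s ↦ by_contra fun hs : μ s ≠ 0 ↦ ?_
  let d := Lagrange.nodal (Finset.univ.erase s) x
  have hd : d.degree < (p + Fintype.card ι : ℕ) := by
    rw [Lagrange.degree_nodal, Finset.card_erase_of_mem (Finset.mem_univ s), Finset.card_univ]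
    have := Fintype.card_pos_iff.mpr ⟨s⟩
    exact_mod_cast (by omega)
  obtain ⟨h', hh', hmem⟩ := exists_sub_C_pow_mul_mem_span_pair hfp hgp le_rfl hgn
    hx₀.1 _ (C_mem_bidegreeLT hd hr)
  have hval (i : ι) (hi : μ i ≠ 0) :
      d.eval (x i) = (x i - x₀) ^ Fintype.card ι * h'.evalEval (x i) (y i) := by
    simpa [evalEval_C] using evalEval_eq_of_sub_mem_span_pair (hf0 i hi) (hg0 i hi) hmem
  have hoff (i : ι) (his : i ≠ s) : μ i * h'.evalEval (x i) (y i) = 0 := by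
    rcases eq_or_ne (μ i) 0 with hi | hi
    · rw [hi, zero_mul]
    have hi0 := hval i hi
    rw [Lagrange.eval_nodal_at_node (by simp [his]), eq_comm, mul_eq_zero] at hi0
    rw [hi0.resolve_left (pow_ne_zero _ fun h0 ↦
      hx₀.2 i (Finset.mem_univ i) (by rw [← neg_sub, h0, neg_zero])), mul_zero]
  have hsum := hμ h' hh'
  rw [Fintype.sum_eq_single s hoff, mul_eq_zero, or_iff_right hs] at hsum
  refine Lagrange.eval_nodal_not_at_node (s := Finset.univ.erase s) (v := x) (x := x s)
    (fun i hi ↦ (hx.ne (Finset.ne_of_mem_erase hi)).symm) ?_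
  rw [hval s hs, hsum, mul_zero]

theorem AnnihilatesBidegreeLT.exists_common_dvd [Infinite K]
    (hμ : AnnihilatesBidegreeLT μ x y p r) (hμ0 : ∀ i, μ i ≠ 0) (hx : Function.Injective x)
    (hf : f ≠ 0) (hg : g ≠ 0) (hfp : degreeX f ≤ p) (hgp : degreeX g ≤ p)
    (hfr : f.natDegree < r) (hfgr : f.natDegree + g.natDegree ≤ r)
    (hf0 : ∀ i, f.evalEval (x i) (y i) = 0) (hg0 : ∀ i, g.evalEval (x i) (y i) = 0) :
    ∃ G, G ∣ f ∧ G ∣ g ∧ ∀ i, G.evalEval (x i) (y i) = 0 := by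
  obtain ⟨f', g', G, hfg', rfl, rfl⟩ :=
    UniqueFactorizationMonoid.exists_reduced_factors f hf g
  obtain ⟨hG, hf'⟩ := mul_ne_zero_iff.mp hf
  have hg' := right_ne_zero_of_mul hg
  rw [degreeX_mul hG hf'] at hfp
  rw [degreeX_mul hG hg'] at hgp
  rw [natDegree_mul hG hf'] at hfr hfgr
  rw [natDegree_mul hG hg'] at hfgr
  have hμG : AnnihilatesBidegreeLT (fun i ↦ μ i * G.evalEval (x i) (y i)) x y (p - degreeX G)
      (r - G.natDegree) :=
    AnnihilatesBidegreeLT.mul_weight (hμ.mono (by omega) (by omega))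
      (mem_bidegreeLT_succ le_rfl le_rfl)
  have hzero := hμG.eq_zero_of_isRelPrime hx (by omega) hf' hfg' (by omega) (by omega) (by omega)
    (fun i hi ↦ by simpa [evalEval_mul, right_ne_zero_of_mul hi] using hf0 i)
    (fun i hi ↦ by simpa [evalEval_mul, right_ne_zero_of_mul hi] using hg0 i)
  exact ⟨G, dvd_mul_right G f', dvd_mul_right G g',
    fun i ↦ (mul_eq_zero.mp (congr_fun hzero i)).resolve_left (hμ0 i)⟩

end CommonZeros

section FrobeniusGraph

variable {K : Type*} [Field K] {f : K[X][Y]} {q : ℕ}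

theorem natDegree_coeff_le_degreeX (f : K[X][Y]) (j : ℕ) : (f.coeff j).natDegree ≤ degreeX f := by
  rw [natDegree_le_iff_coeff_eq_zero]
  intro i hi
  rw [← coeff_coeff_swap, coeff_eq_zero_of_natDegree_lt hi, coeff_zero]

theorem natDegree_eval_le (f : K[X][Y]) (u : K[X]) :
    (f.eval u).natDegree ≤ degreeX f + f.natDegree * u.natDegree := by
  rw [eval_eq_sum_range]
  refine natDegree_sum_le_of_forall_le _ _ fun j hj ↦ natDegree_mul_le.trans ?_
  exact add_le_add (natDegree_coeff_le_degreeX f j) <| natDegree_pow_le.trans <|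
    Nat.mul_le_mul_right _ (Nat.lt_succ_iff.mp (Finset.mem_range.mp hj))

theorem eval_eval_eq_evalEval (f : K[X][Y]) (u : K[X]) (x : K) :
    (f.eval u).eval x = f.evalEval x (u.eval x) := by
  rw [← eval₂_evalRingHom, ← coe_evalRingHom, ← eval₂_at_apply]

theorem eval_X_pow_ne_zero_of_degreeX_lt (hf : f ≠ 0) (hfq : degreeX f < q) :
    f.eval (X ^ q) ≠ 0 := by
  intro hroot
  obtain ⟨g, rfl⟩ := dvd_iff_isRoot.mpr hroot
  have hq : q ≤ degreeX (Y - C (X ^ q) : K[X][Y]) := by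
    apply le_natDegree_of_ne_zero
    intro h
    have hcoeff := coeff_coeff_swap (Y - C (X ^ q) : K[X][Y]) q 0
    rw [h, coeff_sub, coeff_X_zero, coeff_C_zero] at hcoeff
    simp at hcoeff
  rw [degreeX_mul (X_sub_C_ne_zero _) (right_ne_zero_of_mul hf)] at hfq
  omega

variable {ι : Type*} {x : ι → K}

theorem card_le_of_evalEval_pow_eq_zero [Fintype ι] (hx : Function.Injective x) (hf : f ≠ 0)
    (hfq : degreeX f < q) (hf0 : ∀ i, f.evalEval (x i) (x i ^ q) = 0) :
    Fintype.card ι ≤ degreeX f + f.natDegree * q := by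
  classical
  have hroots : Finset.univ.image x ⊆ (f.eval (X ^ q)).roots.toFinset := by
    simp only [Finset.image_subset_iff, Multiset.mem_toFinset,
      mem_roots (eval_X_pow_ne_zero_of_degreeX_lt hf hfq), IsRoot]
    intro i _
    rw [eval_eval_eq_evalEval, eval_pow, eval_X, hf0 i]
  calc Fintype.card ι = (Finset.univ.image x).card :=
        (Finset.card_image_of_injective _ hx).symm
    _ ≤ (f.eval (X ^ q)).natDegree :=
        (Finset.card_le_card hroots).trans ((Multiset.toFinset_card_le _).trans (card_roots' _))
    _ ≤ degreeX f + f.natDegree * q := by simpa using natDegree_eval_le f (X ^ q)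

/-- The conjugate of `f` under a Frobenius map `φ`: `φ` is applied to the coefficients and the two
variables are exchanged. If `(x ^ q) ^ q = x`, the zeros `(x, x ^ q)` of `f` stay zeros. -/
noncomputable def conjugate (φ : K →+* K) (f : K[X][Y]) : K[X][Y] :=
  Bivariate.swap (f.map (mapRingHom φ))

variable (φ : K →+* K)

theorem conjugate_ne_zero (hf : f ≠ 0) : conjugate φ f ≠ 0 := by
  have hinj : Function.Injective (mapRingHom φ) := map_injective φ φ.injective
  simpa [conjugate, Polynomial.map_eq_zero_iff hinj] using hf

theorem degreeX_conjugate (f : K[X][Y]) : degreeX (conjugate φ f) = f.natDegree := by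
  rw [conjugate, degreeX_swap, natDegree_map_eq_of_injective (map_injective φ φ.injective)]

theorem natDegree_conjugate (f : K[X][Y]) : (conjugate φ f).natDegree = degreeX f := by
  have hswap : conjugate φ f = (Bivariate.swap f).map (mapRingHom φ) := by
    ext i j
    simp [conjugate, coeff_coeff_swap]
  rw [hswap, natDegree_map_eq_of_injective (map_injective φ φ.injective), degreeX]

theorem evalEval_conjugate (hφ : ∀ z, φ z = z ^ q) (f : K[X][Y]) {z : K} (hz : (z ^ q) ^ q = z) :
    (conjugate φ f).evalEval z (z ^ q) = f.evalEval z (z ^ q) ^ q := by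
  have h := map_mapRingHom_evalEval φ f z (z ^ q)
  rwa [hφ, hφ, hφ, hz, ← evalEval_swap] at h

end FrobeniusGraph

section VanishingPolynomials

variable {K ι : Type*} [Field K] {x y : ι → K} {D : K[X][Y]} {p r : ℕ}

theorem mem_ker_evalPoints {f : K[X][Y]} :
    f ∈ LinearMap.ker (evalPoints x y) ↔ ∀ i, f.evalEval (x i) (y i) = 0 := by
  simp only [LinearMap.mem_ker, funext_iff, evalPoints_apply, Pi.zero_apply]

theorem degreeX_le_of_dvd {f g : K[X][Y]} (hg : g ≠ 0) (h : f ∣ g) : degreeX f ≤ degreeX g := by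
  obtain ⟨u, rfl⟩ := h
  rw [degreeX_mul (left_ne_zero_of_mul hg) (right_ne_zero_of_mul hg)]
  exact Nat.le_add_right _ _

theorem exists_dvd_minimal_mem_ker {f : K[X][Y]}
    (hf0 : f ∈ LinearMap.ker (evalPoints x y)) :
    ∃ D ∈ LinearMap.ker (evalPoints x y), D ∣ f ∧
      ∀ G ∈ LinearMap.ker (evalPoints x y), G ∣ D → D ∣ G := by
  obtain ⟨D, ⟨hD0, hDf⟩, hmin⟩ := wellFounded_dvdNotUnit.has_min
    {D | D ∈ LinearMap.ker (evalPoints x y) ∧ D ∣ f} ⟨f, hf0, dvd_rfl⟩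
  refine ⟨D, hD0, hDf, fun G hG hGD ↦ by_contra fun hDG ↦ ?_⟩
  exact hmin G ⟨hG, hGD.trans hDf⟩ (dvdNotUnit_of_dvd_of_not_dvd hGD hDG)

theorem finrank_bidegreeLT_inf_ker_le_of_dvd (hD : D ≠ 0)
    (hdvd : ∀ g ∈ bidegreeLT K p r, g ∈ LinearMap.ker (evalPoints x y) → D ∣ g) :
    Module.finrank K ↥(bidegreeLT K p r ⊓ LinearMap.ker (evalPoints x y)) ≤
      (p - degreeX D) * (r - D.natDegree) := by
  have hle : bidegreeLT K p r ⊓ LinearMap.ker (evalPoints x y) ≤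
      (bidegreeLT K (p - degreeX D) (r - D.natDegree)).map (LinearMap.mulLeft K D) := by
    rintro g ⟨hg, hg0⟩
    obtain ⟨u, rfl⟩ := hdvd g hg hg0
    refine ⟨u, ?_, rfl⟩
    rcases eq_or_ne u 0 with rfl | hu
    · exact zero_mem _
    rw [SetLike.mem_coe, mem_bidegreeLT_iff_of_ne_zero (mul_ne_zero hD hu), degreeX_mul hD hu,
      natDegree_mul hD hu] at hg
    rw [SetLike.mem_coe, mem_bidegreeLT_iff_of_ne_zero hu]
    omega
  rw [← finrank_bidegreeLT (R := K)]
  exact (Submodule.finrank_mono hle).trans (Submodule.finrank_map_le _ _)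

theorem AnnihilatesBidegreeLT.dvd_of_minimal [Infinite K] [Fintype ι] {μ : ι → K} {g : K[X][Y]}
    (hμ : AnnihilatesBidegreeLT μ x y p r) (hμ0 : ∀ i, μ i ≠ 0) (hx : Function.Injective x)
    (hD : D ≠ 0) (hD0 : D ∈ LinearMap.ker (evalPoints x y))
    (hmin : ∀ G ∈ LinearMap.ker (evalPoints x y), G ∣ D → D ∣ G)
    (hg : g ∈ LinearMap.ker (evalPoints x y)) (hDp : degreeX D ≤ p) (hgp : degreeX g ≤ p)
    (hDr : D.natDegree < r) (hDgr : D.natDegree + g.natDegree ≤ r) : D ∣ g := by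
  rcases eq_or_ne g 0 with rfl | hg0
  · exact dvd_zero D
  obtain ⟨G, hGD, hGg, hG⟩ := hμ.exists_common_dvd hμ0 hx hD hg0 hDp hgp hDr hDgr
    (mem_ker_evalPoints.mp hD0) (mem_ker_evalPoints.mp hg)
  exact (hmin G (mem_ker_evalPoints.mpr hG) hGD).trans hGg

end VanishingPolynomials

section SupportBound

variable {K ι : Type*} [Field K] {φ : K →+* K} {q k t e : ℕ} {μ x : ι → K} {D : K[X][Y]}

theorem conjugate_mem_ker_evalPoints (hφ : ∀ z, φ z = z ^ q) (hq : q ≠ 0)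
    (hxq : ∀ i, (x i ^ q) ^ q = x i) {f : K[X][Y]}
    (hf : f ∈ LinearMap.ker (evalPoints x fun i ↦ x i ^ q)) :
    conjugate φ f ∈ LinearMap.ker (evalPoints x fun i ↦ x i ^ q) := by
  rw [mem_ker_evalPoints] at *
  intro i
  rw [evalEval_conjugate φ hφ f (hxq i), hf i, zero_pow hq]

variable [Fintype ι]

theorem AnnihilatesBidegreeLT.exists_mem_ker_of_card_lt
    (hμ : AnnihilatesBidegreeLT μ x (fun i ↦ x i ^ q) k k) (hμ0 : ∀ i, μ i ≠ 0)
    (hφ : ∀ z, φ z = z ^ q) (hq : q ≠ 0) (hxq : ∀ i, (x i ^ q) ^ q = x i) (hte : t + e = k + 1)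
    (hcard : Fintype.card ι < 2 * (t * e)) :
    ∃ f ∈ LinearMap.ker (evalPoints x fun i ↦ x i ^ q),
      f ≠ 0 ∧ degreeX f < t ∧ f.natDegree < e := by
  by_contra! hnone
  have hA : bidegreeLT K t e ⊓ LinearMap.ker (evalPoints x fun i ↦ x i ^ q) = ⊥ := by
    rw [Submodule.eq_bot_iff]
    rintro f ⟨hf, hf0⟩
    by_contra hne
    obtain ⟨hfX, hfY⟩ := (mem_bidegreeLT_iff_of_ne_zero hne).mp hf
    exact (hnone f hf0 hne hfX).not_gt hfY
  have hB : bidegreeLT K e t ⊓ LinearMap.ker (evalPoints x fun i ↦ x i ^ q) = ⊥ := by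
    rw [Submodule.eq_bot_iff]
    rintro f ⟨hf, hf0⟩
    by_contra hne
    obtain ⟨hfX, hfY⟩ := (mem_bidegreeLT_iff_of_ne_zero hne).mp hf
    refine (hnone _ (conjugate_mem_ker_evalPoints hφ hq hxq hf0) (conjugate_ne_zero φ hne)
      (by rwa [degreeX_conjugate])).not_gt (by rwa [natDegree_conjugate])
  obtain ⟨ht, he⟩ := mul_ne_zero_iff.mp (show t * e ≠ 0 by omega)
  obtain ⟨t', rfl⟩ := Nat.exists_eq_succ_of_ne_zero ht
  obtain ⟨e', rfl⟩ := Nat.exists_eq_succ_of_ne_zero he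
  have hdim := finrank_bidegreeLT_add_le (p := t') (r := e') (P := e' + 1) (R := t' + 1) hμ0
    (hμ.mono (by omega) (by omega))
  simp only [Nat.succ_eq_add_one] at hA hB hcard
  rw [hA, hB, finrank_bot] at hdim
  linarith

theorem AnnihilatesBidegreeLT.exists_minimal_degreeX_eq_natDegree [Infinite K]
    (hμ : AnnihilatesBidegreeLT μ x (fun i ↦ x i ^ q) k k) (hμ0 : ∀ i, μ i ≠ 0)
    (hφ : ∀ z, φ z = z ^ q) (hq : q ≠ 0) (hx : Function.Injective x)
    (hxq : ∀ i, (x i ^ q) ^ q = x i) (hte : t + e = k + 1) (hcard : Fintype.card ι < 2 * (t * e)) :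
    ∃ D ∈ LinearMap.ker (evalPoints x fun i ↦ x i ^ q), D ≠ 0 ∧ degreeX D < t ∧
      degreeX D = D.natDegree ∧
      ∀ G ∈ LinearMap.ker (evalPoints x fun i ↦ x i ^ q), G ∣ D → D ∣ G := by
  obtain ⟨f, hf0, hf, hfX, hfY⟩ := hμ.exists_mem_ker_of_card_lt hμ0 hφ hq hxq hte hcard
  obtain ⟨D, hD0, hDf, hmin⟩ := exists_dvd_minimal_mem_ker hf0
  have hD := ne_zero_of_dvd_ne_zero hf hDf
  have hDX : degreeX D < t := (degreeX_le_of_dvd hf hDf).trans_lt hfX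
  have hDY : D.natDegree < e := (natDegree_le_of_dvd hDf hf).trans_lt hfY
  have hconj : D ∣ conjugate φ D := by
    apply hμ.dvd_of_minimal hμ0 hx hD hD0 hmin (conjugate_mem_ker_evalPoints hφ hq hxq hD0) <;>
      grind [degreeX_conjugate, natDegree_conjugate]
  refine ⟨D, hD0, hD, hDX, ?_, hmin⟩
  apply le_antisymm
  · simpa [degreeX_conjugate] using degreeX_le_of_dvd (conjugate_ne_zero φ hD) hconj
  · simpa [natDegree_conjugate] using natDegree_le_of_dvd hconj (conjugate_ne_zero φ hD)

/- Vanishing polynomials of small bidegree are multiples of `D`: none of bidegree `< (a, a)`, and at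
most `c ^ 2` dimensions of them of bidegree `< (a + c, a + c)`. -/
theorem AnnihilatesBidegreeLT.two_mul_mul_le_card_of_minimal [Infinite K] {y : ι → K} {a c : ℕ}
    (hμ : AnnihilatesBidegreeLT μ x y k k) (hμ0 : ∀ i, μ i ≠ 0) (hx : Function.Injective x)
    (hD : D ≠ 0) (hD0 : D ∈ LinearMap.ker (evalPoints x y))
    (hmin : ∀ G ∈ LinearMap.ker (evalPoints x y), G ∣ D → D ∣ G)
    (hDX : degreeX D = a) (hDY : D.natDegree = a) (ha : 1 ≤ a) (hc : 1 ≤ c)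
    (hk : a + (a + c) = k + 1) : 2 * (a * (a + c)) ≤ Fintype.card ι := by
  have hdvd (g) (hg : g ∈ bidegreeLT K (a + c) (a + c)) (hg0 : g ∈ LinearMap.ker (evalPoints x y)) :
      D ∣ g := by
    rcases eq_or_ne g 0 with rfl | hne
    · exact dvd_zero D
    obtain ⟨hgX, hgY⟩ := (mem_bidegreeLT_iff_of_ne_zero hne).mp hg
    apply hμ.dvd_of_minimal hμ0 hx hD hD0 hmin hg0 <;> omega
  have hlarge := finrank_bidegreeLT_inf_ker_le_of_dvd hD hdvd
  have hsmall := finrank_bidegreeLT_inf_ker_le_of_dvd hD fun g hg ↦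
    hdvd g (bidegreeLT_mono (Nat.le_add_right a c) (Nat.le_add_right a c) hg)
  obtain ⟨b, rfl⟩ := Nat.exists_eq_add_of_le' ha
  have hdim := finrank_bidegreeLT_add_le (p := b) (r := b) (P := b + 1 + c) (R := b + 1 + c) hμ0
    (hμ.mono (by omega) (by omega))
  simp only [hDX, hDY, Nat.sub_self, Nat.add_sub_cancel_left, mul_zero] at hlarge hsmall
  linarith

theorem AnnihilatesBidegreeLT.two_mul_mul_le_card [Infinite K] [Nonempty ι]
    (hμ : AnnihilatesBidegreeLT μ x (fun i ↦ x i ^ q) k k) (hμ0 : ∀ i, μ i ≠ 0)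
    (hφ : ∀ z, φ z = z ^ q) (hx : Function.Injective x) (hxq : ∀ i, (x i ^ q) ^ q = x i)
    (hk : t + e = k + 1) (hte : t ≤ e) (htq : t ≤ q) (hqe : q ≤ 2 * e) :
    2 * (t * e) ≤ Fintype.card ι := by
  by_contra! hcard
  have ht : t ≠ 0 := by rintro rfl; simp at hcard
  obtain ⟨D, hD0, hD, hDt, hsymm, hmin⟩ :=
    hμ.exists_minimal_degreeX_eq_natDegree hμ0 hφ (by omega) hx hxq hk hcard
  obtain ⟨a, ha⟩ : ∃ a, degreeX D = a := ⟨_, rfl⟩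
  have hpoints : Fintype.card ι ≤ a + a * q := by
    simpa only [← hsymm, ha] using
      card_le_of_evalEval_pow_eq_zero hx hD (hDt.trans_le htq) (mem_ker_evalPoints.mp hD0)
  have hapos : 0 < a := by
    have := Fintype.card_pos (α := ι)
    by_contra! h0
    simp_all
  obtain ⟨c, hc⟩ := Nat.exists_eq_add_of_le (show 2 * a ≤ k + 1 by omega)
  have hlow : 2 * (a * (a + c)) ≤ Fintype.card ι :=
    hμ.two_mul_mul_le_card_of_minimal hμ0 hx hD hD0 hmin ha (hsymm ▸ ha) hapos (by omega) (by omega)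
  have hac : 2 * (a + c) ≤ q + 1 := Nat.le_of_mul_le_mul_left (by linarith) hapos
  omega

end SupportBound

section SquareOrder

variable {F : Type*} [Field F] [Fintype F] {q : ℕ}

theorem exists_ringHom_eq_pow (hF : Fintype.card F = q ^ 2) (K : Type*) [Field K] [Algebra F K] :
    ∃ φ : K →+* K, ∀ z, φ z = z ^ q := by
  obtain ⟨p, _, n, hp, hn⟩ := FiniteField.card' F
  have := Fact.mk hp
  have : CharP K p := charP_of_injective_algebraMap (algebraMap F K).injective p
  obtain ⟨m, -, rfl⟩ := (Nat.dvd_prime_pow hp).mp (hn ▸ hF ▸ Dvd.intro_left q (pow_two q).symm)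
  exact ⟨iterateFrobenius K p m, iterateFrobenius_def p m⟩

theorem pow_pow_eq_self (hF : Fintype.card F = q ^ 2) (z : F) : (z ^ q) ^ q = z := by
  rw [← pow_mul, ← sq, ← hF, FiniteField.pow_card]

variable {ι : Type*} [Fintype ι] {μ x : ι → F} {k t e : ℕ}

theorem AnnihilatesBidegreeLT.two_mul_mul_le_ncard_support (hF : Fintype.card F = q ^ 2)
    (hμ : AnnihilatesBidegreeLT μ x (fun i ↦ x i ^ q) k k) (hμ0 : μ ≠ 0)
    (hx : Set.InjOn x (Function.support μ)) (hk : t + e = k + 1) (hte : t ≤ e) (htq : t ≤ q)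
    (hqe : q ≤ 2 * e) : 2 * (t * e) ≤ (Function.support μ).ncard := by
  classical
  let K := AlgebraicClosure F
  have : Infinite K := IsAlgClosed.instInfinite
  have : Nonempty (Function.support μ) := (Function.support_nonempty_iff.mpr hμ0).to_subtype
  obtain ⟨φ, hφ⟩ := exists_ringHom_eq_pow hF K
  have hK := hμ.restrict_support.map (algebraMap F K)
  rw [← Nat.card_coe_set_eq, Nat.card_eq_fintype_card]
  refine AnnihilatesBidegreeLT.two_mul_mul_le_card
    (x := fun i : Function.support μ ↦ algebraMap F K (x i)) ?_
    (fun i ↦ (map_ne_zero (algebraMap F K)).mpr i.2) hφ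
    ((algebraMap F K).injective.comp hx.injective) (fun i ↦ ?_) hk hte htq hqe
  · simpa only [Function.comp_def, map_pow] using hK
  · rw [← map_pow, ← map_pow, pow_pow_eq_self hF]

end SquareOrder

section MinimumWeight

variable {F : Type} [Field F] {q k t e : ℕ} {a : Fin (q ^ 2) → F} {lam : Fin (q ^ 2 + 1) → F}

theorem rsWord_castSucc (f : F[X]) (i : Fin (q ^ 2)) :
    rsWord q k a f i.castSucc = f.eval (a i) := by
  simp [rsWord]

theorem rsWord_last (f : F[X]) : rsWord q k a f (Fin.last (q ^ 2)) = f.coeff (k - 1) := by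
  simp [rsWord]

variable [Fintype F]

theorem sum_castSucc_add_last_eq_zero (hlam : lam ∈ puncRS q k a) {f g : F[X]}
    (hf : f.degree < k) (hg : g.degree < k) :
    ∑ i, lam i.castSucc * f.eval (a i) * g.eval (a i) ^ q +
      lam (Fin.last _) * f.coeff (k - 1) * g.coeff (k - 1) ^ q = 0 := by
  simpa only [Fin.sum_univ_castSucc, rsWord_castSucc, rsWord_last] using hlam.2 f g hf hg

theorem two_mul_mul_le_wt_of_last_eq_zero (hF : Fintype.card F = q ^ 2)
    (ha : Function.Injective a) (hlam : lam ∈ puncRS q k a) (hlam0 : lam ≠ 0)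
    (hlast : lam (Fin.last _) = 0) (hk : t + e = k + 1) (hte : t ≤ e) (htq : t ≤ q)
    (hqe : q ≤ 2 * e) : 2 * (t * e) ≤ wt lam := by
  refine AnnihilatesBidegreeLT.two_mul_mul_le_ncard_support (k := k)
    (x := Fin.snoc (α := fun _ ↦ F) a 0) hF ?_ hlam0 ?_ hk hte htq hqe
  · rw [annihilatesBidegreeLT_iff_pow]
    intro i hi j hj
    have hsum := sum_castSucc_add_last_eq_zero hlam (f := X ^ i) (g := X ^ j)
      (degree_X_pow_le i |>.trans_lt (by exact_mod_cast hi))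
      (degree_X_pow_le j |>.trans_lt (by exact_mod_cast hj))
    simpa [Fin.sum_univ_castSucc, hlast, pow_right_comm _ q, mul_assoc] using hsum
  · intro i hi j hj hij
    induction i using Fin.lastCases with
    | last => exact absurd hlast hi
    | cast i =>
      induction j using Fin.lastCases with
      | last => exact absurd hlast hj
      | cast j => exact congr_arg Fin.castSucc (ha (by simpa using hij))

theorem coeff_X_sub_C_pow_sub {R : Type*} [CommRing R] [Nontrivial R] (c : R) {i n : ℕ}
    (h : i ≤ n) : ((X - C c) ^ (n - i)).coeff n = 0 ^ i := by
  have hdeg := (monic_X_sub_C c).natDegree_pow (n - i)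
  rw [natDegree_X_sub_C, mul_one] at hdeg
  rcases Nat.eq_zero_or_pos i with rfl | hi
  · rw [pow_zero, ← ((monic_X_sub_C c).pow n).coeff_natDegree]
    exact congr_arg _ hdeg.symm
  · rw [zero_pow hi.ne', coeff_eq_zero_of_natDegree_lt (by omega)]

theorem degree_X_sub_C_pow_lt {R : Type*} [CommRing R] [IsDomain R] (c : R) {i : ℕ} (hi : i < k) :
    ((X - C c) ^ (k - 1 - i)).degree < (k : WithBot ℕ) := by
  rw [degree_pow, degree_X_sub_C, nsmul_one]
  exact_mod_cast (by omega : k - 1 - i < k)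

/- Inverting the affine coordinate at `c` moves a zero coordinate of `lam` to infinity. -/
theorem annihilatesBidegreeLT_snoc_inv_sub (hlam : lam ∈ puncRS q k a) {c : F}
    (hc : ∀ i, lam i.castSucc ≠ 0 → a i - c ≠ 0) :
    AnnihilatesBidegreeLT
      (Fin.snoc (α := fun _ ↦ F)
        (fun i ↦ lam i.castSucc * ((a i - c) ^ (k - 1) * ((a i - c) ^ (k - 1)) ^ q))
        (lam (Fin.last _)))
      (Fin.snoc (α := fun _ ↦ F) (fun i ↦ (a i - c)⁻¹) 0)
      (fun i ↦ Fin.snoc (α := fun _ ↦ F) (fun i ↦ (a i - c)⁻¹) 0 i ^ q) k k := by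
  rw [annihilatesBidegreeLT_iff_pow]
  intro i hi j hj
  have hpow {l : ℕ} (hl : l < k) {z : F} (hz : z ≠ 0) :
      z ^ (k - 1 - l) = z ^ (k - 1) * z⁻¹ ^ l := by
    rw [inv_pow, pow_sub₀ z hz (by omega)]
  have hsum := sum_castSucc_add_last_eq_zero hlam (degree_X_sub_C_pow_lt c hi)
    (degree_X_sub_C_pow_lt c hj)
  rw [coeff_X_sub_C_pow_sub _ (by omega), coeff_X_sub_C_pow_sub _ (by omega)] at hsum
  refine Eq.trans ?_ hsum
  rw [Fin.sum_univ_castSucc]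
  simp only [Fin.snoc_castSucc, Fin.snoc_last, eval_pow, eval_sub, eval_X, eval_C]
  congr 1
  · refine Finset.sum_congr rfl fun s _ ↦ ?_
    rcases eq_or_ne (lam s.castSucc) 0 with hs | hs
    · simp only [hs, zero_mul]
    · rw [hpow hi (hc s hs), hpow hj (hc s hs)]
      ring
  · ring

theorem two_mul_mul_le_wt_of_castSucc_eq_zero (hF : Fintype.card F = q ^ 2)
    (ha : Function.Injective a) (hlam : lam ∈ puncRS q k a) (hlam0 : lam ≠ 0) {i₀ : Fin (q ^ 2)}
    (hi₀ : lam i₀.castSucc = 0) (hk : t + e = k + 1) (hte : t ≤ e) (htq : t ≤ q)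
    (hqe : q ≤ 2 * e) : 2 * (t * e) ≤ wt lam := by
  have hsub (i : Fin (q ^ 2)) (hi : lam i.castSucc ≠ 0) : a i - a i₀ ≠ 0 :=
    sub_ne_zero.mpr fun h ↦ hi (ha h ▸ hi₀)
  let x : Fin (q ^ 2 + 1) → F := Fin.snoc (α := fun _ ↦ F) (fun i ↦ (a i - a i₀)⁻¹) 0
  obtain ⟨μ, hμ, hsupp⟩ : ∃ μ : Fin (q ^ 2 + 1) → F,
      AnnihilatesBidegreeLT μ x (fun i ↦ x i ^ q) k k ∧
        Function.support μ = Function.support lam := by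
    refine ⟨_, annihilatesBidegreeLT_snoc_inv_sub hlam hsub, Set.ext fun i ↦ ?_⟩
    induction i using Fin.lastCases with
    | last => simp
    | cast i =>
      simpa using fun hi ↦ ⟨fun h ↦ absurd h (hsub i hi), fun h ↦ absurd h (hsub i hi)⟩
  have hx : Set.InjOn x (Function.support lam) := by
    intro i hi j hj hij
    induction i using Fin.lastCases with
    | last =>
      induction j using Fin.lastCases with
      | last => rfl
      | cast j => exact absurd (by simpa [x] using hij.symm) (hsub j hj)
    | cast i =>
      induction j using Fin.lastCases with
      | last => exact absurd (by simpa [x] using hij) (hsub i hi)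
      | cast j => exact congr_arg Fin.castSucc (ha (by simpa [x] using hij))
  rw [← Function.support_nonempty_iff, ← hsupp, Function.support_nonempty_iff] at hlam0
  calc 2 * (t * e) ≤ (Function.support μ).ncard :=
        hμ.two_mul_mul_le_ncard_support hF hlam0 (hsupp ▸ hx) hk hte htq hqe
    _ = wt lam := congr_arg Set.ncard hsupp

theorem two_mul_mul_le_wt (hF : Fintype.card F = q ^ 2) (ha : Function.Injective a)
    (hlam : lam ∈ puncRS q k a) (hlam0 : lam ≠ 0) (hk : t + e = k + 1) (hkq : k ≤ q)
    (hte : t ≤ e) (hqe : q ≤ 2 * e) : 2 * (t * e) ≤ wt lam := by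
  have htq : t ≤ q := by omega
  by_cases hlast : lam (Fin.last _) = 0
  · exact two_mul_mul_le_wt_of_last_eq_zero hF ha hlam hlam0 hlast hk hte htq hqe
  by_cases hzero : ∃ i : Fin (q ^ 2), lam i.castSucc = 0
  · obtain ⟨i, hi⟩ := hzero
    exact two_mul_mul_le_wt_of_castSucc_eq_zero hF ha hlam hlam0 hi hk hte htq hqe
  have hfull : {i | lam i ≠ 0} = Set.univ :=
    Set.eq_univ_of_forall fun i ↦ Fin.lastCases hlast (fun i ↦ not_exists.mp hzero i) i
  rw [wt, hfull, Set.ncard_univ, Nat.card_fin]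
  have hamgm := four_mul_le_pow_two_add t e
  have hsq : (t + e) ^ 2 ≤ (q + 1) ^ 2 := Nat.pow_le_pow_left (by omega) 2
  have hq := two_mul_le_add_sq q 1
  linarith

end MinimumWeight

section PreimageCount

theorem ncard_preimage_mul_card {G H : Type*} [AddGroup G] [AddGroup H] [Finite G] [Finite H]
    {f : G →+ H} (hf : Function.Surjective f) (S : Set H) :
    (f ⁻¹' S).ncard * Nat.card H = S.ncard * Nat.card G := by
  classical
  have := Fintype.ofFinite G
  have := Fintype.ofFinite H
  have hfib (T : Finset H) : (f ⁻¹' T).ncard = T.card * Finset.card {g | f g = 0} := by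
    have hT : f ⁻¹' T = ({g | f g ∈ T} : Finset G) := by ext; simp
    rw [hT, Set.ncard_coe_finset, ← smul_eq_mul, ← Finset.sum_const,
      Finset.card_eq_sum_card_fiberwise (f := f) (t := T) fun g hg ↦ by simpa using hg]
    refine Finset.sum_congr rfl fun y hy ↦ ?_
    rw [AddMonoidHom.card_fiber_eq_of_mem_range f (hf 0) (hf y), Finset.filter_filter]
    exact congr_arg _ (Finset.filter_congr fun g _ ↦ and_iff_right_of_imp fun h ↦ h ▸ hy)
  have huniv := hfib Finset.univ
  have hS := hfib S.toFinset
  rw [Finset.coe_univ, Set.preimage_univ, Set.ncard_univ, Finset.card_univ] at huniv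
  rw [Set.coe_toFinset, ← Set.ncard_eq_toFinset_card'] at hS
  rw [huniv, hS, Nat.card_eq_fintype_card]
  ring

end PreimageCount

section TraceWeight

variable (E : Type*) {K : Type*} [Field E] [Field K] [Algebra E K]

/-- The weight `c ↦ Tr_{K/E}(c) ∏_{d ∈ D} (c - d)` on `K`; pulled back along `Tr_{F/K}` it gives the
codewords of small weight. -/
noncomputable def traceWeight (D : Finset K) (c : K) : K :=
  algebraMap E K (Algebra.trace E K c) * ∏ d ∈ D, (c - d)

variable {D : Finset K}

theorem support_traceWeight :
    Function.support (traceWeight E D) = {c | Algebra.trace E K c ≠ 0} \ D := by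
  ext c
  simp [traceWeight, Finset.prod_eq_zero_iff, sub_eq_zero]

variable [Finite K]

theorem ncard_trace_ne_zero_mul :
    {c : K | Algebra.trace E K c ≠ 0}.ncard * Nat.card E = (Nat.card E - 1) * Nat.card K := by
  have := Finite.of_injective _ (algebraMap E K).injective
  rw [← Set.ncard_singleton (0 : E), ← Set.ncard_compl,
    ← ncard_preimage_mul_card (f := (Algebra.trace E K).toAddMonoidHom)
    (Algebra.trace_surjective E K)]
  rfl

variable {F : Type*} [Field F] [Finite F] [Algebra K F]

theorem ncard_support_traceWeight_trace_mul :
    (Function.support fun x : F ↦ algebraMap K F (traceWeight E D (Algebra.trace K F x))).ncard *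
      Nat.card K = ({c | Algebra.trace E K c ≠ 0} \ D : Set K).ncard * Nat.card F := by
  rw [← ncard_preimage_mul_card (f := (Algebra.trace K F).toAddMonoidHom)
    (Algebra.trace_surjective K F), ← support_traceWeight]
  congr 2
  ext x
  simp

end TraceWeight

section TraceOrthogonality

theorem AnnihilatesBidegreeLT.mul_prod_add_sub {K ι κ : Type*} [Field K] [Fintype ι]
    {μ x y : ι → K} {p r : ℕ} (D : Finset κ) (c : κ → K)
    (h : AnnihilatesBidegreeLT μ x y (p + D.card) (r + D.card)) :
    AnnihilatesBidegreeLT (fun i ↦ μ i * ∏ d ∈ D, (x i + y i - c d)) x y p r := by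
  classical
  induction D using Finset.induction_on generalizing μ with
  | empty => simpa using h
  | insert d D hd ih =>
    rw [Finset.card_insert_of_notMem hd, ← add_assoc, ← add_assoc, add_comm _ 1, add_comm _ 1] at h
    have hlin : C (X - C (c d)) + Y ∈ bidegreeLT K (1 + 1) (1 + 1) := by
      have hX := map_C_mem_bidegreeLT (R := K) (p := 2) (r := 2) (u := X) one_le_two
        (by rw [degree_X]; exact Nat.one_lt_ofNat)
      rw [map_X] at hX
      exact add_mem
        (C_mem_bidegreeLT (by rw [degree_X_sub_C]; exact Nat.one_lt_ofNat) one_le_two) hX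
    simpa [Finset.prod_insert hd, mul_assoc, add_sub_right_comm, evalEval_C] using
      ih (h.mul_weight hlin)

variable {F : Type*} [Field F] [Fintype F] {q : ℕ}

theorem sum_mul_pow_mul_pow_eq_zero (hF : Fintype.card F = q ^ 2) {n i j : ℕ} (hn : n ≤ q)
    (hi : i < q - 1) (hj : j < q - 1) : ∑ x : F, x ^ n * (x ^ i * (x ^ q) ^ j) = 0 := by
  have hlt : n + i + q * j < Fintype.card F - 1 := by
    obtain ⟨m, rfl⟩ : ∃ m, q = m + 2 := ⟨q - 2, by omega⟩
    have hmul : (m + 2) * j ≤ (m + 2) * m := Nat.mul_le_mul_left _ (by omega)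
    have hsq : (m + 2) ^ 2 = (m + 2) * m + 2 * m + 4 := by ring
    omega
  simpa only [pow_add, pow_mul, mul_assoc] using FiniteField.sum_pow_lt_card_sub_one F _ hlt

theorem sum_pow_mul_pow_mul_pow_eq_zero (hF : Fintype.card F = q ^ 2) {n i j : ℕ} (hn : n ≤ q)
    (hi : i < q - 1) (hj : j < q - 1) : ∑ x : F, (x ^ q) ^ n * (x ^ i * (x ^ q) ^ j) = 0 := by
  have hinv : Function.Involutive fun x : F ↦ x ^ q := pow_pow_eq_self hF
  rw [← hinv.bijective.sum_comp]
  simpa only [pow_pow_eq_self hF, mul_comm (_ ^ i)] using sum_mul_pow_mul_pow_eq_zero hF hn hj hi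

variable (E K : Type*) [Field E] [Field K] [Algebra E K] [Algebra E F] [Algebra K F]
  [IsScalarTower E K F]

theorem finrank_eq_two (hF : Fintype.card F = q ^ 2) (hK : Nat.card K = q) :
    Module.finrank K F = 2 := by
  have := Finite.of_injective _ (algebraMap K F).injective
  have := Fintype.ofFinite K
  refine Nat.pow_right_injective (Finite.one_lt_card (α := K)) ?_
  beta_reduce
  rw [← Module.natCard_eq_pow_finrank, Nat.card_eq_fintype_card, hF, hK]

theorem algebraMap_trace_eq_add_pow (hF : Fintype.card F = q ^ 2) (hK : Nat.card K = q) (x : F) :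
    algebraMap K F (Algebra.trace K F x) = x + x ^ q := by
  simp [FiniteField.algebraMap_trace_eq_sum_pow, finrank_eq_two K hF hK, hK, Finset.sum_range_succ]

theorem algebraMap_trace_eq_sum_pow_add_pow (hF : Fintype.card F = q ^ 2) (hK : Nat.card K = q)
    (x : F) :
    algebraMap E F (Algebra.trace E F x) =
      ∑ i ∈ Finset.range (Module.finrank E K),
        (x ^ Nat.card E ^ i + (x ^ q) ^ Nat.card E ^ i) := by
  have := Finite.of_injective _ (algebraMap K F).injective
  rw [FiniteField.algebraMap_trace_eq_sum_pow, ← Module.finrank_mul_finrank E K F,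
    finrank_eq_two K hF hK, mul_two, Finset.sum_range_add, Finset.sum_add_distrib]
  simp only [pow_add, pow_mul, ← Module.natCard_eq_pow_finrank, hK]

theorem annihilatesBidegreeLT_trace (hF : Fintype.card F = q ^ 2) (hK : Nat.card K = q) :
    AnnihilatesBidegreeLT (fun x : F ↦ algebraMap E F (Algebra.trace E F x)) id (· ^ q)
      (q - 1) (q - 1) := by
  have := Finite.of_injective _ (algebraMap K F).injective
  have := Finite.of_injective _ (algebraMap E K).injective
  rw [annihilatesBidegreeLT_iff_pow]
  intro i hi j hj
  simp only [algebraMap_trace_eq_sum_pow_add_pow E K hF hK, Finset.sum_mul, add_mul, id_eq]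
  rw [Finset.sum_comm]
  refine Finset.sum_eq_zero fun s hs ↦ ?_
  have hsq : Nat.card E ^ s ≤ q := by
    rw [← hK, Module.natCard_eq_pow_finrank (K := E) (V := K)]
    exact Nat.pow_le_pow_right Nat.card_pos (Finset.mem_range.mp hs).le
  rw [Finset.sum_add_distrib, sum_mul_pow_mul_pow_eq_zero hF hsq hi hj,
    sum_pow_mul_pow_mul_pow_eq_zero hF hsq hi hj, add_zero]

variable {K} {D : Finset K} {k : ℕ}

theorem annihilatesBidegreeLT_traceWeight (hF : Fintype.card F = q ^ 2) (hK : Nat.card K = q)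
    (hk : k + D.card = q - 1) :
    AnnihilatesBidegreeLT (fun x : F ↦ algebraMap K F (traceWeight E D (Algebra.trace K F x)))
      id (· ^ q) k k := by
  have h := annihilatesBidegreeLT_trace (F := F) E K hF hK
  rw [← hk] at h
  have := Finite.of_injective _ (algebraMap K F).injective
  simpa only [traceWeight, map_mul, map_prod, map_sub, algebraMap_trace_eq_add_pow K hF hK,
    ← IsScalarTower.algebraMap_apply, Algebra.trace_trace, id_eq] using
    h.mul_prod_add_sub D (algebraMap K F)

end TraceOrthogonality

section SmallWeight

variable {F : Type} [Field F] {q k : ℕ} {a : Fin (q ^ 2) → F} {μ : F → F}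

theorem wt_snoc_zero (ha : Function.Bijective a) :
    wt (Fin.snoc (α := fun _ ↦ F) (μ ∘ a) 0) = (Function.support μ).ncard := by
  have h : {i | Fin.snoc (α := fun _ ↦ F) (μ ∘ a) 0 i ≠ 0} =
      Fin.castSucc '' (a ⁻¹' Function.support μ) := by
    ext i
    induction i using Fin.lastCases with
    | last => simp
    | cast i => simp
  rw [wt, h, Set.ncard_image_of_injective _ (Fin.castSucc_injective _),
    Set.ncard_preimage_of_injective_subset_range ha.1 (by simp [ha.2.range_eq])]

variable [Fintype F]

theorem snoc_zero_mem_puncRS (hF : Fintype.card F = q ^ 2) (ha : Function.Bijective a)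
    (hμq : ∀ x, μ x ^ q = μ x) (hμ : AnnihilatesBidegreeLT μ id (· ^ q) k k) :
    Fin.snoc (α := fun _ ↦ F) (μ ∘ a) 0 ∈ puncRS q k a := by
  obtain ⟨φ, hφ⟩ := exists_ringHom_eq_pow hF F
  have hq : q ≠ 0 := by rintro rfl; simp at hF
  refine ⟨fun i ↦ ?_, fun f g hf hg ↦ ?_⟩
  · induction i using Fin.lastCases with
    | last => simp [hq]
    | cast i => simpa using hμq (a i)
  obtain rfl | hk := Nat.eq_zero_or_pos k
  · simp [rsWord, show f = 0 by simpa using hf]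
  have hfg : C f * (g.map φ).map C ∈ bidegreeLT F k k := by
    have hmul := mul_mem_bidegreeLT (p := k - 1) (r := 0) (p' := 1) (r' := k)
      (C_mem_bidegreeLT (u := f) (by rwa [Nat.sub_add_cancel hk]) le_rfl)
      (map_C_mem_bidegreeLT (u := g.map φ) le_rfl (degree_map_le.trans_lt hg))
    rwa [Nat.sub_add_cancel hk, Nat.zero_add] at hmul
  have hsum := hμ _ hfg
  rw [← ha.sum_comp] at hsum
  simpa [Fin.sum_univ_castSucc, rsWord_castSucc, evalEval_C, evalEval_map_C, ← hφ, mul_assoc]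
    using hsum

variable (E K : Type*) [Field E] [Field K] [Algebra E K] [Algebra E F] [Algebra K F]
  [IsScalarTower E K F]

theorem exists_mem_puncRS_wt_eq (hF : Fintype.card F = q ^ 2) (hK : Nat.card K = q)
    (ha : Function.Bijective a) (hkq : k ≤ q - 1)
    (hk : q - 1 - k ≤ {c : K | Algebra.trace E K c ≠ 0}.ncard) :
    ∃ lam ∈ puncRS q k a,
      wt lam = q * ({c : K | Algebra.trace E K c ≠ 0}.ncard - (q - 1 - k)) := by
  have := Finite.of_injective _ (algebraMap K F).injective
  have := Fintype.ofFinite K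
  obtain ⟨D, hDA, hD⟩ := Set.exists_subset_card_eq hk
  obtain ⟨D, rfl⟩ := D.toFinite.exists_finset_coe
  rw [Set.ncard_coe_finset] at hD
  refine ⟨_, snoc_zero_mem_puncRS hF ha (fun x ↦ ?_)
    (annihilatesBidegreeLT_traceWeight E hF hK (D := D) (by omega)), ?_⟩
  · rw [← map_pow, ← hK, Nat.card_eq_fintype_card, FiniteField.pow_card]
  · have hcard := ncard_support_traceWeight_trace_mul E (F := F) (D := D)
    rw [Set.ncard_sdiff hDA, Set.ncard_coe_finset, hD, hK, Nat.card_eq_fintype_card, hF, sq,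
      ← mul_assoc] at hcard
    rw [wt_snoc_zero ha, mul_comm q]
    exact Nat.eq_of_mul_eq_mul_right (hK ▸ Nat.card_pos) hcard

end SmallWeight

section PrimePower

variable {F : Type} [Field F] [Fintype F] {k : ℕ}

theorem exists_mem_puncRS_wt_eq_of_prime_pow {p n : ℕ} [Fact p.Prime]
    (hF : Fintype.card F = (p ^ (n + 1)) ^ 2) {a : Fin ((p ^ (n + 1)) ^ 2) → F}
    (ha : Function.Bijective a) (hkq : k ≤ p ^ (n + 1) - 1)
    (hk : p ^ (n + 1) - 1 - k ≤ (p - 1) * p ^ n) :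
    ∃ lam ∈ puncRS (p ^ (n + 1)) k a,
      wt lam = p ^ (n + 1) * ((p - 1) * p ^ n - (p ^ (n + 1) - 1 - k)) := by
  let K := GaloisField p (n + 1)
  have hK : Nat.card K = p ^ (n + 1) := GaloisField.card p (n + 1) n.succ_ne_zero
  have : CharP F p := charP_of_card_eq_prime_pow (hF.trans (pow_mul _ _ _).symm)
  let : Algebra (ZMod p) F := ZMod.algebra F p
  have hfinrank : Module.finrank (ZMod p) F = (n + 1) * 2 :=
    Nat.pow_right_injective (Fact.out : p.Prime).two_le <| by
      simpa only [FiniteField.pow_finrank_eq_card, pow_mul] using hF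
  obtain ⟨σ⟩ := FiniteField.nonempty_algHom_of_finrank_dvd (F := ZMod p) (K := K) (L := F) <| by
    rw [GaloisField.finrank p n.succ_ne_zero, hfinrank]
    exact dvd_mul_right _ _
  let : Algebra K F := σ.toRingHom.toAlgebra
  have : IsScalarTower (ZMod p) K F := .of_algebraMap_eq' σ.comp_algebraMap.symm
  have hA : {c : K | Algebra.trace (ZMod p) K c ≠ 0}.ncard = (p - 1) * p ^ n := by
    have hcard := ncard_trace_ne_zero_mul (ZMod p) (K := K)
    rw [hK, Nat.card_zmod, pow_succ, ← mul_assoc] at hcard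
    exact Nat.eq_of_mul_eq_mul_right (Fact.out : p.Prime).pos hcard
  rw [← hA] at hk ⊢
  exact exists_mem_puncRS_wt_eq (ZMod p) K hF hK ha hkq hk

end PrimePower

/-- If `q = 2^h` is even and `q/2 ≤ k ≤ q-1`, then the minimum Hamming
distance of the puncture code `P(C)` of the `[q²+1, k, q²+2-k]_{q²}` Reed-Solomon code `C`
is exactly `q(k + 1 - q/2)`. -/
theorem min_distance_puncture_RS_q_even
    (q k h : ℕ) (hh : 1 ≤ h) (hq : q = 2 ^ h) (hk1 : q ≤ 2 * k) (hk2 : k ≤ q - 1)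
    (F : Type) [Field F] [Fintype F] (hF : Fintype.card F = q ^ 2)
    (a : Fin (q ^ 2) → F) (ha : Function.Bijective a) :
    (∃ lam ∈ puncRS q k a, lam ≠ 0 ∧ wt lam = q * (k + 1 - q / 2)) ∧
    (∀ lam ∈ puncRS q k a, lam ≠ 0 → q * (k + 1 - q / 2) ≤ wt lam) := by
  obtain ⟨n, rfl⟩ : ∃ n, h = n + 1 := ⟨h - 1, by omega⟩
  have hhalf : q = 2 * 2 ^ n := hq.trans (pow_succ' 2 n)
  have hpos : 0 < 2 ^ n := by positivity
  have hdiv : q / 2 = 2 ^ n := by omega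
  rw [hdiv]
  constructor
  · subst hq
    have hsub : (2 - 1) * 2 ^ n - (2 ^ (n + 1) - 1 - k) = k + 1 - 2 ^ n := by omega
    obtain ⟨lam, hlam, hwt⟩ := exists_mem_puncRS_wt_eq_of_prime_pow hF ha hk2 (by omega)
    rw [hsub] at hwt
    refine ⟨lam, hlam, ?_, hwt⟩
    rintro rfl
    have hwt_pos : 0 < 2 ^ (n + 1) * (k + 1 - 2 ^ n) := Nat.mul_pos (by omega) (by omega)
    simp [← hwt, wt] at hwt_pos
  · intro lam hlam hlam0
    calc q * (k + 1 - 2 ^ n) = 2 * ((k + 1 - 2 ^ n) * 2 ^ n) := by rw [hhalf]; ring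
      _ ≤ wt lam := two_mul_mul_le_wt hF ha.injective hlam hlam0 (by omega) (by omega)
          (by omega) hhalf.le
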